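/- Any two Abelian heaps A and B admit a coproduct in the category of Abelian heaps: there exist an Abelian heap C and heap morphisms ι_A : A → C and ι_B : B → C such that for every Abelian heap H and all heap morphisms φ : A → H and ψ : B → H there exists a unique heap morphism ξ : C → H with ξ ∘ ι_A = φ and ξ ∘ ι_B = ψ. -/

import Mathlib

/-- A ternary operation is a heap operation if it is associative and
satisfies the Mal'cev identities. -/
def IsHeap {H : Type*} (op : H → H → H → H) : Prop :=
  (∀ a b c d e : H, op (op a b c) d e = op a b (op c d e)) ∧
  (∀ a b : H, op a b b = a) ∧ (∀ a b : H, op b b a = a)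

/-- An Abelian heap is a heap whose ternary operation satisfies
`[a,b,c] = [c,b,a]`. -/
def IsAbelianHeap {H : Type*} (op : H → H → H → H) : Prop :=
  IsHeap op ∧ ∀ a b c : H, op a b c = op c b a

/-!
Take all formal brackets in the elements of `A` and `B`, modulo the congruence generated by the
Abelian heap axioms and by identifying every formal bracket of three elements of `A`, or of three
elements of `B`, with its value there. The last relations make the two inclusions morphisms. A pair
of maps into an Abelian heap `H` evaluates formal brackets in `H`, and the evaluation respects the
congruence as soon as both maps are morphisms; since a morphism is determined on formal brackets by
its values on letters, no other factorization is possible.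
-/

universe u v w

/-- Morphisms of sets with a ternary operation; between heaps these are the heap morphisms. -/
def IsHeapHom {H K : Type*} (opH : H → H → H → H) (opK : K → K → K → K) (f : H → K) : Prop :=
  ∀ a b c, f (opH a b c) = opK (f a) (f b) (f c)

/-- Formal brackets in letters from `X`: the free ternary operation on `X`, before any heap axiom
is imposed. -/
inductive HeapTerm (X : Type u) : Type u
  | of : X → HeapTerm X
  | op : HeapTerm X → HeapTerm X → HeapTerm X → HeapTerm X

namespace HeapTerm

variable {X : Type u} {H : Type*} {opH : H → H → H → H}

/-- The value of a formal bracket under an assignment `f` of its letters. -/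
def eval (opH : H → H → H → H) (f : X → H) : HeapTerm X → H
  | of x => f x
  | op s t u => opH (s.eval opH f) (t.eval opH f) (u.eval opH f)

/-- The congruence on formal brackets generated by `r` and the Abelian heap axioms. -/
inductive Congruent (r : HeapTerm X → HeapTerm X → Prop) : HeapTerm X → HeapTerm X → Prop
  | rel {s t} : r s t → Congruent r s t
  | refl (t) : Congruent r t t
  | symm {s t} : Congruent r s t → Congruent r t s
  | trans {s t u} : Congruent r s t → Congruent r t u → Congruent r s u
  | op_congr {s s' t t' u u'} : Congruent r s s' → Congruent r t t' → Congruent r u u' →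
      Congruent r (op s t u) (op s' t' u')
  | assoc (a b c d e) : Congruent r (op (op a b c) d e) (op a b (op c d e))
  | cancel_right (a b) : Congruent r (op a b b) a
  | cancel_left (a b) : Congruent r (op b b a) a
  | comm (a b c) : Congruent r (op a b c) (op c b a)

variable {r : HeapTerm X → HeapTerm X → Prop}

theorem Congruent.eval_eq (hH : IsAbelianHeap opH) {f : X → H}
    (hf : ∀ s t, r s t → s.eval opH f = t.eval opH f) {s t : HeapTerm X}
    (h : Congruent r s t) : s.eval opH f = t.eval opH f := by
  obtain ⟨⟨op_assoc, op_cancel_right, op_cancel_left⟩, op_comm⟩ := hH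
  induction h with
  | rel h => exact hf _ _ h
  | refl => rfl
  | symm _ ih => exact ih.symm
  | trans _ _ ih₁ ih₂ => exact ih₁.trans ih₂
  | op_congr _ _ _ ihs iht ihu => simp only [eval, ihs, iht, ihu]
  | assoc => exact op_assoc _ _ _ _ _
  | cancel_right => exact op_cancel_right _ _
  | cancel_left => exact op_cancel_left _ _
  | comm => exact op_comm _ _ _

/-- `Congruent r` as a setoid, for forming the quotient `PresentedAbelianHeap r`. -/
def congruentSetoid (r : HeapTerm X → HeapTerm X → Prop) : Setoid (HeapTerm X) :=
  ⟨Congruent r, .refl, .symm, .trans⟩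

end HeapTerm

theorem IsHeapHom.map_eval {X : Type u} {H K : Type*} {opH : H → H → H → H}
    {opK : K → K → K → K} {g : H → K} (hg : IsHeapHom opH opK g) (f : X → H) (t : HeapTerm X) :
    g (t.eval opH f) = t.eval opK (g ∘ f) := by
  induction t with
  | of x => rfl
  | op s t u ihs iht ihu => rw [HeapTerm.eval, hg, ihs, iht, ihu, HeapTerm.eval]

/-- The Abelian heap with generators `X` and relations `s = t` whenever `r s t`. -/
def PresentedAbelianHeap {X : Type u} (r : HeapTerm X → HeapTerm X → Prop) : Type u :=
  Quotient (HeapTerm.congruentSetoid r)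

namespace PresentedAbelianHeap

open HeapTerm (Congruent)

variable {X : Type u} (r : HeapTerm X → HeapTerm X → Prop)

/-- The class of a formal bracket in the presented heap. -/
def mk (t : HeapTerm X) : PresentedAbelianHeap r :=
  Quotient.mk _ t

/-- The generators of the presented heap. -/
def of (x : X) : PresentedAbelianHeap r :=
  mk r (.of x)

/-- The heap operation induced by formal brackets on their classes. -/
def op : PresentedAbelianHeap r → PresentedAbelianHeap r → PresentedAbelianHeap r →
    PresentedAbelianHeap r :=
  Quotient.lift
    (fun s => Quotient.map₂ (HeapTerm.op s) fun _ _ ht _ _ hu => .op_congr (.refl s) ht hu)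
    fun _ _ hs => by
      ext ⟨t⟩ ⟨u⟩
      exact Quotient.sound (.op_congr hs (.refl t) (.refl u))

variable {r}

theorem mk_eq_mk {s t : HeapTerm X} (h : Congruent r s t) : mk r s = mk r t :=
  Quotient.sound h

theorem isAbelianHeap_op : IsAbelianHeap (op r) := by
  refine ⟨⟨?_, ?_, ?_⟩, ?_⟩
  · rintro ⟨a⟩ ⟨b⟩ ⟨c⟩ ⟨d⟩ ⟨e⟩
    exact mk_eq_mk (.assoc a b c d e)
  · rintro ⟨a⟩ ⟨b⟩
    exact mk_eq_mk (.cancel_right a b)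
  · rintro ⟨a⟩ ⟨b⟩
    exact mk_eq_mk (.cancel_left a b)
  · rintro ⟨a⟩ ⟨b⟩ ⟨c⟩
    exact mk_eq_mk (.comm a b c)

theorem eval_of_eq_mk (t : HeapTerm X) : t.eval (op r) (of r) = mk r t := by
  induction t with
  | of x => rfl
  | op s t u ihs iht ihu =>
    rw [HeapTerm.eval, ihs, iht, ihu]
    rfl

variable {H : Type*} {opH : H → H → H → H}

theorem hom_ext {g h : PresentedAbelianHeap r → H} (hg : IsHeapHom (op r) opH g)
    (hh : IsHeapHom (op r) opH h) (eq_of : ∀ x, g (of r x) = h (of r x)) : g = h := by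
  ext ⟨t⟩
  calc g (mk r t) = t.eval opH (g ∘ of r) := by rw [← eval_of_eq_mk, hg.map_eval]
    _ = t.eval opH (h ∘ of r) := by rw [show g ∘ of r = h ∘ of r from funext eq_of]
    _ = h (mk r t) := by rw [← eval_of_eq_mk, hh.map_eval]

theorem existsUnique_lift (hH : IsAbelianHeap opH) (f : X → H)
    (hf : ∀ s t, r s t → s.eval opH f = t.eval opH f) :
    ∃! g : PresentedAbelianHeap r → H, IsHeapHom (op r) opH g ∧ ∀ x, g (of r x) = f x := by
  let g : PresentedAbelianHeap r → H :=
    Quotient.lift (HeapTerm.eval opH f) fun _ _ h => h.eval_eq hH hf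
  have hg : IsHeapHom (op r) opH g := by
    rintro ⟨s⟩ ⟨t⟩ ⟨u⟩
    rfl
  exact ⟨g, ⟨hg, fun _ => rfl⟩, fun h ⟨hh, h_of⟩ => hom_ext hh hg h_of⟩

end PresentedAbelianHeap

open PresentedAbelianHeap

/-- The relations on `A ⊕ B` saying that brackets of elements of `A`, and of elements of `B`, are
computed in `A` and in `B`; the Abelian heap they present is the coproduct. -/
inductive CoproductRel {A : Type u} {B : Type v} (opA : A → A → A → A) (opB : B → B → B → B) :
    HeapTerm (A ⊕ B) → HeapTerm (A ⊕ B) → Prop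
  | inl (a b c : A) : CoproductRel opA opB (.of (.inl (opA a b c)))
      (.op (.of (.inl a)) (.of (.inl b)) (.of (.inl c)))
  | inr (a b c : B) : CoproductRel opA opB (.of (.inr (opB a b c)))
      (.op (.of (.inr a)) (.of (.inr b)) (.of (.inr c)))

theorem CoproductRel.eval_eq {A : Type u} {B : Type v} {H : Type*} {opA : A → A → A → A}
    {opB : B → B → B → B} {opH : H → H → H → H} {φ : A → H} {ψ : B → H}
    (hφ : IsHeapHom opA opH φ) (hψ : IsHeapHom opB opH ψ) {s t : HeapTerm (A ⊕ B)}
    (h : CoproductRel opA opB s t) :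
    s.eval opH (Sum.elim φ ψ) = t.eval opH (Sum.elim φ ψ) := by
  cases h with
  | inl a b c => exact hφ a b c
  | inr a b c => exact hψ a b c

theorem abelian_heaps_have_coproducts_general {A : Type u} {B : Type v}
    (opA : A → A → A → A) (opB : B → B → B → B) :
    ∃ (C : Type (max u v)) (opC : C → C → C → C), IsAbelianHeap opC ∧
      ∃ (ιA : A → C) (ιB : B → C), IsHeapHom opA opC ιA ∧ IsHeapHom opB opC ιB ∧
        ∀ (H : Type w) (opH : H → H → H → H), IsAbelianHeap opH →
          ∀ (φ : A → H) (ψ : B → H), IsHeapHom opA opH φ → IsHeapHom opB opH ψ →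
            ∃! ξ : C → H, IsHeapHom opC opH ξ ∧ (∀ a, ξ (ιA a) = φ a) ∧ ∀ b, ξ (ιB b) = ψ b := by
  let r := CoproductRel opA opB
  refine ⟨PresentedAbelianHeap r, op r, isAbelianHeap_op, fun a => of r (.inl a),
    fun b => of r (.inr b), fun a b c => mk_eq_mk (.rel (.inl a b c)),
    fun a b c => mk_eq_mk (.rel (.inr a b c)), ?_⟩
  intro H opH hH φ ψ hφ hψ
  simpa only [Sum.forall, Sum.elim_inl, Sum.elim_inr] using
    existsUnique_lift hH (Sum.elim φ ψ) fun _ _ h => h.eval_eq hφ hψ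

/-- Any two Abelian heaps `A` and `B` admit a coproduct in the
category of Abelian heaps. -/
theorem abelian_heaps_have_coproducts {A B : Type} (opA : A → A → A → A)
    (hA : IsAbelianHeap opA) (opB : B → B → B → B) (hB : IsAbelianHeap opB) :
    ∃ (C : Type) (opC : C → C → C → C), IsAbelianHeap opC ∧
      ∃ (ιA : A → C) (ιB : B → C),
        (∀ a b c : A, ιA (opA a b c) = opC (ιA a) (ιA b) (ιA c)) ∧
        (∀ a b c : B, ιB (opB a b c) = opC (ιB a) (ιB b) (ιB c)) ∧
        ∀ (H : Type) (opH : H → H → H → H), IsAbelianHeap opH →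
          ∀ (φ : A → H) (ψ : B → H),
            (∀ a b c : A, φ (opA a b c) = opH (φ a) (φ b) (φ c)) →
            (∀ a b c : B, ψ (opB a b c) = opH (ψ a) (ψ b) (ψ c)) →
            ∃! ξ : C → H,
              (∀ x y z : C, ξ (opC x y z) = opH (ξ x) (ξ y) (ξ z)) ∧
              (∀ a : A, ξ (ιA a) = φ a) ∧ (∀ b : B, ξ (ιB b) = ψ b) :=
  abelian_heaps_have_coproducts_general opA opB
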